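/- The languages L_a = {w ∈ {a,b,c}* \ {ε} : |w|_c > |w|_a} and L_b = {w ∈ {a,b,c}* \ {ε} : |w|_c > |w|_b} are each binary-PODWA-recognizable (each by a DWA with a single state), but their union L_a ∪ L_b is not binary-PODWA-recognizable. Hence the class of binary-PODWA-recognizable languages is not closed under union. -/

import Mathlib

/-- A deterministic weighted automaton (DWA) over alphabet `A` with state space `Q`. -/
structure DWA (A : Type) (Q : Type) where
  init : Q
  δ : Q → A → Q
  c : Q → A → ℤ

/-- The extended transition function `δ̂`. -/
def DWA.run {A Q : Type} (M : DWA A Q) (q : Q) (w : List A) : Q :=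
  w.foldl M.δ q

/-- The accumulated weight of the run on `w` starting in state `q`. -/
def DWA.valFrom {A Q : Type} (M : DWA A Q) : Q → List A → ℤ
  | _, [] => 0
  | q, x :: w => M.c q x + M.valFrom (M.δ q x) w

/-- The value `A(w)` of a word: the sum of the weights along the run from the initial state. -/
def DWA.val {A Q : Type} (M : DWA A Q) (w : List A) : ℤ :=
  M.valFrom M.init w

/-- The three-letter alphabet `{a, b, c}`. -/
inductive ABC where
  | a : ABC
  | b : ABC
  | c : ABC
deriving DecidableEq

theorem DWA.run_append {A Q : Type} (M : DWA A Q) (q : Q) (u v : List A) :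
    M.run q (u ++ v) = M.run (M.run q u) v := by
  simp [DWA.run]

theorem DWA.valFrom_append {A Q : Type} (M : DWA A Q) (u v : List A) (q : Q) :
    M.valFrom q (u ++ v) = M.valFrom q u + M.valFrom (M.run q u) v := by
  induction u generalizing q with
  | nil => simp [DWA.run, DWA.valFrom]
  | cons x u ih =>
    simp only [List.cons_append, DWA.valFrom, ih, DWA.run, List.foldl_cons]
    ring

theorem DWA.run_replicate {A Q : Type} (M : DWA A Q) (x : A) (n : ℕ) (q : Q) :
    M.run q (List.replicate n x) = (fun p => M.δ p x)^[n] q := by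
  induction n generalizing q with
  | zero => rfl
  | succ n ih =>
    rw [List.replicate_succ, Function.iterate_succ_apply, ← ih]
    rfl

/-- A common exponent making every letter act idempotently. -/
theorem DWA.exists_idem {Q : Type} [Fintype Q] (M : DWA ABC Q) :
    ∃ N : ℕ, 0 < N ∧ ∀ x q, M.run (M.run q (List.replicate N x)) (List.replicate N x)
      = M.run q (List.replicate N x) := by
  classical
  haveI : Finite ABC := Finite.of_injective
    (fun x : ABC => (match x with | .a => 0 | .b => 1 | .c => 2 : Fin 3))
    (by intro x y; cases x <;> cases y <;> simp)
  obtain ⟨m, n, hne, he⟩ := Finite.exists_ne_map_eq_of_infinite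
    (fun (n : ℕ) (x : ABC) (q : Q) => (fun p => M.δ p x)^[n] q)
  wlog hlt : m < n generalizing m n
  · exact this n m hne.symm he.symm (by omega)
  obtain ⟨p, rfl⟩ := Nat.exists_eq_add_of_lt hlt
  have key : ∀ x q k t, (fun p => M.δ p x)^[t + m + k * (p + 1)] q
      = (fun p => M.δ p x)^[t + m] q := by
    intro x q k t
    induction k with
    | zero => simp
    | succ k ih =>
      rw [← ih]
      have h1 : t + m + (k + 1) * (p + 1) = (t + k * (p + 1)) + (m + p + 1) := by ring
      have h2 : t + m + k * (p + 1) = (t + k * (p + 1)) + m := by ring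
      rw [h1, h2, Function.iterate_add_apply, Function.iterate_add_apply _ _ m]
      exact congrArg _ (congrFun (congrFun he x) q).symm
  refine ⟨(m + 1) * (p + 1), by positivity, fun x q => ?_⟩
  rw [DWA.run_replicate, DWA.run_replicate, ← Function.iterate_add_apply]
  have h3 : (m + 1) * (p + 1) = (m * p + p + 1) + m := by ring
  have := key x q (m + 1) (m * p + p + 1)
  rwa [← h3] at this

theorem DWA.unit_val (M : DWA ABC Unit) (w : List ABC) (q : Unit) :
    M.valFrom q w = M.c () .a * w.count .a + M.c () .b * w.count .b + M.c () .c * w.count .c := by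
  induction w generalizing q with
  | nil => simp [DWA.valFrom]
  | cons x w ih =>
    rw [DWA.valFrom, ih]
    cases x <;> simp <;> ring

/-- the languages `L_a = {w ≠ ε : |w|_c > |w|_a}` and
`L_b = {w ≠ ε : |w|_c > |w|_b}` are each recognized by a single-state DWA, but their union is
not binary-PODWA-recognizable; hence the class of binary-PODWA-recognizable languages is not
closed under union. -/
theorem binary_podwa_not_closed_under_union :
    (∃ M : DWA ABC Unit, ∀ w : List ABC, w ≠ [] →
        (0 < M.val w ↔ w.count ABC.a < w.count ABC.c)) ∧
    (∃ M : DWA ABC Unit, ∀ w : List ABC, w ≠ [] →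
        (0 < M.val w ↔ w.count ABC.b < w.count ABC.c)) ∧
    ¬ ∃ (Q : Type) (_ : Fintype Q) (M : DWA ABC Q),
        ∀ w : List ABC, w ≠ [] →
          (0 < M.val w ↔
            (w.count ABC.a < w.count ABC.c ∨ w.count ABC.b < w.count ABC.c)) := by
  refine ⟨⟨⟨(), fun _ _ => (), fun _ x => match x with | .a => -1 | .b => 0 | .c => 1⟩, ?_⟩,
    ⟨⟨(), fun _ _ => (), fun _ x => match x with | .a => 0 | .b => -1 | .c => 1⟩, ?_⟩, ?_⟩
  · intro w _
    rw [DWA.val, DWA.unit_val]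
    dsimp only
    omega
  · intro w _
    rw [DWA.val, DWA.unit_val]
    dsimp only
    omega
  · rintro ⟨Q, _, M, h⟩
    obtain ⟨N, hN, hid⟩ := M.exists_idem
    have hne : List.replicate N ABC.a ≠ [] := by simp; omega
    have h1 := h (List.replicate N .a ++ (List.replicate N .b ++ (List.replicate N .b ++
      (List.replicate N .b ++ (List.replicate N .c ++ List.replicate N .c))))) (by simp; omega)
    have h2 := h (List.replicate N .a ++ (List.replicate N .a ++ (List.replicate N .a ++
      (List.replicate N .b ++ (List.replicate N .c ++ List.replicate N .c))))) (by simp; omega)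
    have h3 := h (List.replicate N .a ++ (List.replicate N .a ++ (List.replicate N .b ++
      (List.replicate N .b ++ (List.replicate N .c ++ List.replicate N .c))))) (by simp; omega)
    simp only [DWA.val, DWA.valFrom_append, hid, List.count_append, List.count_replicate,
      beq_iff_eq, reduceCtorEq, if_true, if_false] at h1 h2 h3
    have g1 := h1.2 (by omega)
    have g2 := h2.2 (by omega)
    have g3 := mt h3.1 (by omega)
    linarith
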